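/- arXiv:1702.06240 — 6 statements merged into one kernel-verified Lean document; each statement's English description precedes it below -/
import Mathlib

section
/- For every 𝒵-measurable integrable real random variable M such that M + (D/S)·(Y* − M) is integrable, E[M + (D/S)·(Y* − M) | 𝒵] = E[Y* | 𝒵] a.s.; that is, the Robins–Rotnitzky-type doubly robust signal is an unbiased signal for the regression function with partially missing outcome, for any 𝒵-measurable regression-function plug-in M. -/
open MeasureTheory Filter
open scoped ENNReal

/-- **Unbiasedness of the Robins–Rotnitzky doubly robust signal for the regression
function with partially missing outcome.** For any 𝒵-measurable integrable plug-in
`M` such that the doubly robust signal `M + (D/S)·(Y* − M)` is integrable,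
`E[M + (D/S)·(Y* − M) | 𝒵] = E[Y* | 𝒵]` a.s. -/
theorem dr_signal_unbiased_missing_data
    {Ω : Type*} {m0 : MeasurableSpace Ω} {μ : Measure Ω} [IsProbabilityMeasure μ]
    (𝒵 : MeasurableSpace Ω) (h𝒵 : 𝒵 ≤ m0)
    (D Ystar S : Ω → ℝ) (sbar : ℝ) (hsbar0 : 0 < sbar) (hsbar1 : sbar < 1)
    (hD01 : ∀ ω, D ω = 0 ∨ D ω = 1)
    (hSmeas : Measurable[𝒵] S)
    (hS : S =ᵐ[μ] μ[D | 𝒵])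
    (hSbound : ∀ᵐ ω ∂μ, sbar ≤ S ω ∧ S ω ≤ 1)
    (hMAR : μ[fun ω => D ω * Ystar ω | 𝒵] =ᵐ[μ] fun ω => S ω * (μ[Ystar | 𝒵]) ω)
    (hYint : Integrable Ystar μ) :
    ∀ M : Ω → ℝ, Measurable[𝒵] M → Integrable M μ →
      Integrable (fun ω => M ω + D ω / S ω * (Ystar ω - M ω)) μ →
      μ[fun ω => M ω + D ω / S ω * (Ystar ω - M ω) | 𝒵] =ᵐ[μ] μ[Ystar | 𝒵] := by
  intro M hM hMint hint
  have hDint : Integrable D μ := by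
    by_contra h
    rw [condExp_of_not_integrable h] at hS
    obtain ⟨ω, h1, h2⟩ := (hS.and hSbound).exists
    simp only [Pi.zero_apply] at h1
    linarith [h2.1]
  have hDb : ∀ᵐ ω ∂μ, ‖D ω‖ ≤ 1 := by
    refine Eventually.of_forall fun ω => ?_
    rcases hD01 ω with h | h <;> simp [h]
  have hDY : Integrable (fun ω => D ω * Ystar ω) μ :=
    hYint.bdd_mul hDint.aestronglyMeasurable hDb
  have hDM : Integrable (M * D) μ := by
    have h := hMint.bdd_mul hDint.aestronglyMeasurable hDb
    rw [mul_comm]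
    exact h
  have hSinv : StronglyMeasurable[𝒵] (fun ω => (S ω)⁻¹) := hSmeas.inv.stronglyMeasurable
  have hdiff : Integrable ((fun ω => D ω * Ystar ω) - M * D) μ := hDY.sub hDM
  have hprod : Integrable ((fun ω => (S ω)⁻¹) * ((fun ω => D ω * Ystar ω) - M * D)) μ := by
    refine hdiff.bdd_mul (c := sbar⁻¹) (hSinv.mono h𝒵).aestronglyMeasurable ?_
    filter_upwards [hSbound] with ω hω
    rw [norm_inv, Real.norm_of_nonneg (hsbar0.le.trans hω.1)]
    exact inv_anti₀ hsbar0 hω.1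
  have heq : (fun ω => M ω + D ω / S ω * (Ystar ω - M ω)) =
      M + (fun ω => (S ω)⁻¹) * ((fun ω => D ω * Ystar ω) - M * D) := by
    funext ω
    simp only [Pi.add_apply, Pi.mul_apply, Pi.sub_apply]
    ring
  rw [heq]
  have e1 := condExp_add hMint hprod 𝒵
  have e2 := condExp_mul_of_stronglyMeasurable_left hSinv hprod hdiff
  have e3 := condExp_sub hDY hDM 𝒵
  have e4 := condExp_mul_of_stronglyMeasurable_left hM.stronglyMeasurable hDM hDint
  have e5 := condExp_of_stronglyMeasurable h𝒵 hM.stronglyMeasurable hMint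
  filter_upwards [e1, e2, e3, e4, hS, hSbound, hMAR] with ω h1 h2 h3 h4 h5 h6 h7
  have hne : S ω ≠ 0 := (hsbar0.trans_le h6.1).ne'
  simp only [Pi.add_apply, Pi.mul_apply, Pi.sub_apply] at h1 h2 h3 h4
  rw [h1, h2, h3, h4, h7, e5, ← h5]
  field_simp
  ring
end

section
/- Let M be a 𝒵-measurable real random variable with S·M = E[D·Y* | 𝒵] a.s., and assume Y* is integrable. Then for every 𝒵-measurable bounded real random variable h, E[(D/S²)·(Y* − M)·h | 𝒵] = 0 a.s. (Neyman orthogonality of the doubly robust missing-data signal with respect to perturbations of the propensity score: the pathwise derivative of the conditional mean of the signal in the direction h of the propensity-score component is identically zero.) -/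
open MeasureTheory Filter
open scoped ENNReal

/-- **Neyman orthogonality of the doubly robust missing-data signal with respect to
the propensity score.** If `M` is 𝒵-measurable with `S·M = E[D·Y* | 𝒵]` a.s. and
`Y*` is integrable, then for every 𝒵-measurable bounded `h`,
`E[(D/S²)·(Y* − M)·h | 𝒵] = 0` a.s. -/
theorem dr_signal_orthogonal_propensity_missing_data
    {Ω : Type*} {m0 : MeasurableSpace Ω} {μ : Measure Ω} [IsProbabilityMeasure μ]
    (𝒵 : MeasurableSpace Ω) (h𝒵 : 𝒵 ≤ m0)
    (D Ystar S M : Ω → ℝ) (sbar : ℝ) (hsbar0 : 0 < sbar) (hsbar1 : sbar < 1)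
    (hD01 : ∀ ω, D ω = 0 ∨ D ω = 1)
    (hSmeas : Measurable[𝒵] S)
    (hS : S =ᵐ[μ] μ[D | 𝒵])
    (hSbound : ∀ᵐ ω ∂μ, sbar ≤ S ω ∧ S ω ≤ 1)
    (hMmeas : Measurable[𝒵] M)
    (hM : (fun ω => S ω * M ω) =ᵐ[μ] μ[fun ω => D ω * Ystar ω | 𝒵])
    (hYint : Integrable Ystar μ) :
    ∀ h : Ω → ℝ, Measurable[𝒵] h → (∃ C : ℝ, ∀ ω, |h ω| ≤ C) →
      μ[fun ω => D ω / (S ω) ^ 2 * (Ystar ω - M ω) * h ω | 𝒵] =ᵐ[μ] (fun _ => (0 : ℝ)) := by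
  intro h hh ⟨C, hC⟩
  have hDint : Integrable D μ := by
    by_contra hn
    rw [condExp_of_not_integrable hn] at hS
    have hF : ∀ᵐ ω ∂μ, False := by
      filter_upwards [hS, hSbound] with ω h1 h2
      simp only [Pi.zero_apply] at h1
      linarith [h2.1]
    exact hF.exists.elim fun _ hx => hx
  have hDb : ∀ᵐ ω ∂μ, ‖D ω‖ ≤ 1 := by
    refine Eventually.of_forall fun ω => ?_
    rcases hD01 ω with h1 | h1 <;> simp [h1]
  have hDY : Integrable (fun ω => D ω * Ystar ω) μ :=
    hYint.bdd_mul hDint.aestronglyMeasurable hDb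
  have hSM : Integrable (fun ω => S ω * M ω) μ := integrable_condExp.congr hM.symm
  have hMint : Integrable M μ := by
    have h1 : Integrable (fun ω => (S ω)⁻¹ * (S ω * M ω)) μ := by
      refine hSM.bdd_mul (c := sbar⁻¹) (hSmeas.mono h𝒵 le_rfl).inv.aestronglyMeasurable ?_
      filter_upwards [hSbound] with ω h2
      have h3 : 0 < S ω := lt_of_lt_of_le hsbar0 h2.1
      rw [Real.norm_of_nonneg (inv_nonneg.mpr h3.le)]
      exact inv_anti₀ hsbar0 h2.1
    refine h1.congr ?_
    filter_upwards [hSbound] with ω h2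
    have h3 : 0 < S ω := lt_of_lt_of_le hsbar0 h2.1
    field_simp
  have hMD : Integrable (M * D) μ := by
    have h1 : Integrable (fun ω => D ω * M ω) μ := hMint.bdd_mul hDint.aestronglyMeasurable hDb
    exact h1.congr (Eventually.of_forall fun ω => mul_comm _ _)
  have hc1 : μ[M * D | 𝒵] =ᵐ[μ] M * μ[D | 𝒵] :=
    condExp_mul_of_stronglyMeasurable_left hMmeas.stronglyMeasurable hMD hDint
  have hc2 := condExp_sub hDY hMD 𝒵
  have hf : StronglyMeasurable[𝒵] (fun ω => h ω * ((S ω) ^ 2)⁻¹) :=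
    (hh.mul (hSmeas.pow_const 2).inv).stronglyMeasurable
  have hc3 := condExp_stronglyMeasurable_mul_of_bound h𝒵 hf (hDY.sub hMD)
    (C * (sbar ^ 2)⁻¹) (by
      filter_upwards [hSbound] with ω h2
      have h3 : 0 < S ω := lt_of_lt_of_le hsbar0 h2.1
      rw [norm_mul, Real.norm_eq_abs, Real.norm_of_nonneg (by positivity)]
      have h4 : ((S ω) ^ 2)⁻¹ ≤ (sbar ^ 2)⁻¹ :=
        inv_anti₀ (by positivity) (pow_le_pow_left₀ hsbar0.le h2.1 2)
      exact mul_le_mul (hC ω) h4 (by positivity) ((abs_nonneg _).trans (hC ω)))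
  have heq : (fun ω => D ω / (S ω) ^ 2 * (Ystar ω - M ω) * h ω)
      = (fun ω => h ω * ((S ω) ^ 2)⁻¹) * ((fun ω => D ω * Ystar ω) - M * D) := by
    funext ω
    simp only [Pi.mul_apply, Pi.sub_apply, div_eq_mul_inv]
    ring
  rw [heq]
  filter_upwards [hc1, hc2, hc3, hS, hM] with ω h1 h2 h3 h4 h5
  rw [h3, Pi.mul_apply, h2, Pi.sub_apply, h1, Pi.mul_apply, ← h4, ← h5]
  ring
end

section
/- Assume Y¹ and Y⁰ are integrable and (D·Y°)/S − ((1−D)·Y°)/(1−S) is integrable. Then E[(D·Y°)/S − ((1−D)·Y°)/(1−S) | 𝒵] = E[Y¹ − Y⁰ | 𝒵] a.s.; that is, the inverse-probability-weighted signal is an unbiased signal for the conditional average treatment effect. -/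
open MeasureTheory Filter
open scoped ENNReal

/-- **Unbiasedness of the IPW signal for the conditional average treatment effect.**
With observed outcome `Y° = D·Y¹ + (1−D)·Y⁰` and propensity score `S = E[D | 𝒵]`
bounded in `[s̄, 1−s̄]`, under the first-moment factorizations
`E[D·Y¹ | 𝒵] = S·E[Y¹ | 𝒵]` and `E[(1−D)·Y⁰ | 𝒵] = (1−S)·E[Y⁰ | 𝒵]`,
`E[(D·Y°)/S − ((1−D)·Y°)/(1−S) | 𝒵] = E[Y¹ − Y⁰ | 𝒵]` a.s. -/
theorem ipw_signal_unbiased_cate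
    {Ω : Type*} {m0 : MeasurableSpace Ω} {μ : Measure Ω} [IsProbabilityMeasure μ]
    (𝒵 : MeasurableSpace Ω) (h𝒵 : 𝒵 ≤ m0)
    (D Y1 Y0 S : Ω → ℝ) (sbar : ℝ) (hsbar0 : 0 < sbar) (hsbar1 : sbar < 1 / 2)
    (hD01 : ∀ ω, D ω = 0 ∨ D ω = 1)
    (Yo : Ω → ℝ) (hYo : Yo = fun ω => D ω * Y1 ω + (1 - D ω) * Y0 ω)
    (hSmeas : Measurable[𝒵] S)
    (hS : S =ᵐ[μ] μ[D | 𝒵])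
    (hSbound : ∀ᵐ ω ∂μ, sbar ≤ S ω ∧ S ω ≤ 1 - sbar)
    (hfact1 : μ[fun ω => D ω * Y1 ω | 𝒵] =ᵐ[μ] fun ω => S ω * (μ[Y1 | 𝒵]) ω)
    (hfact0 : μ[fun ω => (1 - D ω) * Y0 ω | 𝒵] =ᵐ[μ] fun ω => (1 - S ω) * (μ[Y0 | 𝒵]) ω)
    (hY1int : Integrable Y1 μ) (hY0int : Integrable Y0 μ)
    (hint : Integrable (fun ω => D ω * Yo ω / S ω - (1 - D ω) * Yo ω / (1 - S ω)) μ) :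
    μ[fun ω => D ω * Yo ω / S ω - (1 - D ω) * Yo ω / (1 - S ω) | 𝒵] =ᵐ[μ]
      μ[fun ω => Y1 ω - Y0 ω | 𝒵] := by
  have hDint : Integrable D μ := by
    by_contra h
    rw [condExp_of_not_integrable h] at hS
    have : ∀ᵐ ω ∂μ, False := by
      filter_upwards [hS, hSbound] with ω h1 h2
      have h3 : S ω = 0 := h1
      linarith [h2.1]
    obtain ⟨_, h⟩ := this.exists
    exact h
  have hDm := hDint.aestronglyMeasurable
  have hA : Integrable (fun ω => D ω * Y1 ω) μ := by
    refine hY1int.bdd_mul (c := 1) hDm (Eventually.of_forall fun ω => ?_)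
    rcases hD01 ω with h | h <;> simp [h]
  have hB : Integrable (fun ω => (1 - D ω) * Y0 ω) μ := by
    refine hY0int.bdd_mul (c := 1) (aestronglyMeasurable_const.sub hDm)
      (Eventually.of_forall fun ω => ?_)
    rcases hD01 ω with h | h <;> simp [h]
  have hf1 : StronglyMeasurable[𝒵] (fun ω => (S ω)⁻¹) := hSmeas.inv.stronglyMeasurable
  have hf0 : StronglyMeasurable[𝒵] (fun ω => (1 - S ω)⁻¹) :=
    (hSmeas.const_sub 1).inv.stronglyMeasurable
  have hb1 : ∀ᵐ ω ∂μ, ‖(S ω)⁻¹‖ ≤ sbar⁻¹ := by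
    filter_upwards [hSbound] with ω h
    rw [norm_inv, Real.norm_of_nonneg (by linarith [h.1])]
    exact inv_anti₀ hsbar0 h.1
  have hb0 : ∀ᵐ ω ∂μ, ‖(1 - S ω)⁻¹‖ ≤ sbar⁻¹ := by
    filter_upwards [hSbound] with ω h
    rw [norm_inv, Real.norm_of_nonneg (by linarith [h.2])]
    exact inv_anti₀ hsbar0 (by linarith [h.2])
  have e1 := condExp_stronglyMeasurable_mul_of_bound h𝒵 hf1 hA _ hb1
  have e0 := condExp_stronglyMeasurable_mul_of_bound h𝒵 hf0 hB _ hb0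
  have i1 := hA.bdd_mul (hf1.mono h𝒵).aestronglyMeasurable hb1
  have i0 := hB.bdd_mul (hf0.mono h𝒵).aestronglyMeasurable hb0
  have hEq : (fun ω => D ω * Yo ω / S ω - (1 - D ω) * Yo ω / (1 - S ω)) =
      ((fun ω => (S ω)⁻¹) * fun ω => D ω * Y1 ω) -
        ((fun ω => (1 - S ω)⁻¹) * fun ω => (1 - D ω) * Y0 ω) := by
    funext ω
    rcases hD01 ω with h | h <;> simp [hYo, h, div_eq_inv_mul]
  rw [hEq]
  have e2 := condExp_sub (m := 𝒵) i1 i0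
  have e3 := condExp_sub (m := 𝒵) hY1int hY0int
  refine e2.trans (EventuallyEq.trans ?_ e3.symm)
  filter_upwards [e1, e0, hfact1, hfact0, hSbound] with ω h1 h0 g1 g0 hb
  have p1 : S ω ≠ 0 :=
    (by linarith [hb.1] : 0 < S ω).ne'
  have p0 : 1 - S ω ≠ 0 :=
    (by linarith [hb.2] : 0 < 1 - S ω).ne'
  simp only [Pi.sub_apply]
  refine congrArg₂ _ (h1.trans ?_) (h0.trans ?_)
  · simp only [Pi.mul_apply, g1]
    field_simp
  · simp only [Pi.mul_apply, g0]
    field_simp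
end

section
/- For all 𝒵-measurable integrable real random variables M₁ and M₀ such that the displayed signal is integrable, E[M₁ − M₀ + (D/S)·(Y° − M₁) − ((1−D)/(1−S))·(Y° − M₀) | 𝒵] = E[Y¹ − Y⁰ | 𝒵] a.s.; that is, the Robins–Rotnitzky-type doubly robust signal is an unbiased signal for the conditional average treatment effect for any 𝒵-measurable regression-function plug-ins M₁, M₀. -/
open MeasureTheory Filter
open scoped ENNReal

/-- **Unbiasedness of the Robins–Rotnitzky doubly robust signal for the conditional
average treatment effect.** For all 𝒵-measurable integrable plug-ins `M₁`, `M₀` such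
that the doubly robust signal is integrable,
`E[M₁ − M₀ + (D/S)(Y° − M₁) − ((1−D)/(1−S))(Y° − M₀) | 𝒵] = E[Y¹ − Y⁰ | 𝒵]` a.s. -/
theorem dr_signal_unbiased_cate
    {Ω : Type*} {m0 : MeasurableSpace Ω} {μ : Measure Ω} [IsProbabilityMeasure μ]
    (𝒵 : MeasurableSpace Ω) (h𝒵 : 𝒵 ≤ m0)
    (D Y1 Y0 S : Ω → ℝ) (sbar : ℝ) (hsbar0 : 0 < sbar) (hsbar1 : sbar < 1 / 2)
    (hD01 : ∀ ω, D ω = 0 ∨ D ω = 1)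
    (Yo : Ω → ℝ) (hYo : Yo = fun ω => D ω * Y1 ω + (1 - D ω) * Y0 ω)
    (hSmeas : Measurable[𝒵] S)
    (hS : S =ᵐ[μ] μ[D | 𝒵])
    (hSbound : ∀ᵐ ω ∂μ, sbar ≤ S ω ∧ S ω ≤ 1 - sbar)
    (hfact1 : μ[fun ω => D ω * Y1 ω | 𝒵] =ᵐ[μ] fun ω => S ω * (μ[Y1 | 𝒵]) ω)
    (hfact0 : μ[fun ω => (1 - D ω) * Y0 ω | 𝒵] =ᵐ[μ] fun ω => (1 - S ω) * (μ[Y0 | 𝒵]) ω)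
    (hY1int : Integrable Y1 μ) (hY0int : Integrable Y0 μ) :
    ∀ M1 M0 : Ω → ℝ, Measurable[𝒵] M1 → Measurable[𝒵] M0 →
      Integrable M1 μ → Integrable M0 μ →
      Integrable (fun ω => M1 ω - M0 ω + D ω / S ω * (Yo ω - M1 ω)
        - (1 - D ω) / (1 - S ω) * (Yo ω - M0 ω)) μ →
      μ[fun ω => M1 ω - M0 ω + D ω / S ω * (Yo ω - M1 ω)
          - (1 - D ω) / (1 - S ω) * (Yo ω - M0 ω) | 𝒵] =ᵐ[μ]
        μ[fun ω => Y1 ω - Y0 ω | 𝒵] := by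
  intro M1 M0 hM1 hM0 hM1i hM0i _
  have hDint : Integrable D μ := by
    by_contra h
    rw [condExp_of_not_integrable h] at hS
    have hF : ∀ᵐ ω ∂μ, False := by
      filter_upwards [hS, hSbound] with ω h1 h2
      have h3 : S ω = 0 := h1
      linarith [h2.1]
    obtain ⟨_, hω⟩ := hF.exists
    exact hω
  have hDcint : Integrable (fun ω => 1 - D ω) μ := (integrable_const 1).sub hDint
  have hDb : ∀ᵐ ω ∂μ, ‖D ω‖ ≤ 1 := ae_of_all _ fun ω => by
    rcases hD01 ω with h | h <;> simp [h]
  have hDcb : ∀ᵐ ω ∂μ, ‖1 - D ω‖ ≤ 1 := ae_of_all _ fun ω => by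
    rcases hD01 ω with h | h <;> simp [h]
  have key : ∀ (E T Y M : Ω → ℝ), Integrable E μ → (∀ᵐ ω ∂μ, ‖E ω‖ ≤ 1) →
      Measurable[𝒵] T → (T =ᵐ[μ] μ[E | 𝒵]) → (∀ᵐ ω ∂μ, sbar ≤ T ω) →
      μ[fun ω => E ω * Y ω | 𝒵] =ᵐ[μ] (fun ω => T ω * (μ[Y | 𝒵]) ω) →
      Integrable Y μ → Measurable[𝒵] M → Integrable M μ →
      Integrable (fun ω => M ω + (T ω)⁻¹ * (E ω * Y ω - E ω * M ω)) μ ∧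
      μ[fun ω => M ω + (T ω)⁻¹ * (E ω * Y ω - E ω * M ω) | 𝒵] =ᵐ[μ] μ[Y | 𝒵] := by
    intro E T Y M hE hEb hT hTE hTb hf hY hM hMi
    have hEY : Integrable (fun ω => E ω * Y ω) μ := hY.bdd_mul hE.aestronglyMeasurable hEb
    have hEM : Integrable (fun ω => E ω * M ω) μ := hMi.bdd_mul hE.aestronglyMeasurable hEb
    have hTi : Measurable[𝒵] (fun ω => (T ω)⁻¹) := hT.inv
    have hTib : ∀ᵐ ω ∂μ, ‖(T ω)⁻¹‖ ≤ sbar⁻¹ := by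
      filter_upwards [hTb] with ω h
      rw [norm_inv, Real.norm_of_nonneg (by linarith)]
      exact inv_anti₀ hsbar0 h
    have hA : Integrable (fun ω => E ω * Y ω - E ω * M ω) μ := hEY.sub hEM
    have hTA : Integrable (fun ω => (T ω)⁻¹ * (E ω * Y ω - E ω * M ω)) μ :=
      hA.bdd_mul (hTi.mono h𝒵 le_rfl).aestronglyMeasurable hTib
    refine ⟨hMi.add hTA, ?_⟩
    have e1 := condExp_add hMi hTA 𝒵
    have e2 := condExp_stronglyMeasurable_mul_of_bound h𝒵 hTi.stronglyMeasurable hA _ hTib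
    have e3 := condExp_sub hEY hEM 𝒵
    have e4 := condExp_mul_of_stronglyMeasurable_right (μ := μ) hM.stronglyMeasurable hEM hE
    have e5 := condExp_of_stronglyMeasurable h𝒵 hM.stronglyMeasurable hMi
    filter_upwards [e1, e2, e3, e4, hf, hTE, hTb] with ω e1 e2 e3 e4 hf hTE hTb
    have hT0 : T ω ≠ 0 := by linarith [hTb] |> fun (h : 0 < T ω) => h.ne'
    simp only [Pi.add_apply, Pi.sub_apply, Pi.mul_apply] at e1 e2 e3 e4
    rw [e5] at e1
    refine e1.trans ?_
    refine (congrArg (M ω + ·) (e2.trans (congrArg ((T ω)⁻¹ * ·)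
      (e3.trans (congrArg₂ (· - ·) hf e4))))).trans ?_
    rw [← hTE]
    field_simp
    ring
  obtain ⟨i1, k1⟩ := key D S Y1 M1 hDint hDb hSmeas hS (hSbound.mono fun _ h => h.1) hfact1
    hY1int hM1 hM1i
  have hSc : (fun ω => 1 - S ω) =ᵐ[μ] μ[fun ω => 1 - D ω | 𝒵] := by
    have e := condExp_sub (integrable_const (μ := μ) (1 : ℝ)) hDint 𝒵
    rw [condExp_const h𝒵] at e
    filter_upwards [e, hS] with ω e hS
    refine Eq.trans ?_ e.symm
    simp [hS]
  obtain ⟨i0, k0⟩ := key (fun ω => 1 - D ω) (fun ω => 1 - S ω) Y0 M0 hDcint hDcb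
    (measurable_const.sub hSmeas) hSc (hSbound.mono fun _ h => by linarith [h.2]) hfact0
    hY0int hM0 hM0i
  have hsig : (fun ω => M1 ω - M0 ω + D ω / S ω * (Yo ω - M1 ω)
          - (1 - D ω) / (1 - S ω) * (Yo ω - M0 ω)) =
      (fun ω => M1 ω + (S ω)⁻¹ * (D ω * Y1 ω - D ω * M1 ω)) -
      (fun ω => M0 ω + (1 - S ω)⁻¹ * ((1 - D ω) * Y0 ω - (1 - D ω) * M0 ω)) := by
    funext ω
    simp only [hYo, Pi.sub_apply]
    rcases hD01 ω with h | h <;> simp only [h] <;> ring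
  rw [hsig]
  exact (condExp_sub i1 i0 𝒵).trans ((k1.sub k0).trans (condExp_sub hY1int hY0int 𝒵).symm)
end

section
/- For all 𝒵-measurable integrable real random variables M₁ and M₀ such that the displayed signal is integrable, E[M₁ − M₀ + (D·T/(S·H))·(Y° − M₁) − (D·(1−T)/(S·(1−H)))·(Y° − M₀) | 𝒵] = E[Y¹ − Y⁰ | 𝒵] a.s.; that is, in a randomized experiment with a partially missing outcome, the doubly robust signal that weights by both the treatment propensity and the missingness propensity is an unbiased signal for the conditional average treatment effect. -/
open MeasureTheory Filter
open scoped ENNReal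

theorem arm_aux
    {Ω : Type*} {m0 : MeasurableSpace Ω} {μ : Measure Ω} [IsProbabilityMeasure μ]
    (𝒵 𝒲 : MeasurableSpace Ω) (h𝒵𝒲 : 𝒵 ≤ 𝒲) (h𝒲 : 𝒲 ≤ m0)
    (T D Y H S M : Ω → ℝ)
    (hbar sbar : ℝ) (hhbar0 : 0 < hbar) (hsbar0 : 0 < sbar)
    (hT01 : ∀ ω, T ω = 0 ∨ T ω = 1) (hD01 : ∀ ω, D ω = 0 ∨ D ω = 1)
    (hDint : Integrable D μ)
    (hTmeas : Measurable[𝒲] T)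
    (hHmeas : Measurable[𝒵] H)
    (hH : H =ᵐ[μ] μ[T | 𝒵])
    (hHbound : ∀ᵐ ω ∂μ, hbar ≤ H ω)
    (hSmeas : Measurable[𝒲] S)
    (hS : S =ᵐ[μ] μ[D | 𝒲])
    (hSbound : ∀ᵐ ω ∂μ, sbar ≤ S ω)
    (hYint : Integrable Y μ)
    (hMAR : μ[fun ω => D ω * Y ω | 𝒲] =ᵐ[μ] fun ω => S ω * (μ[Y | 𝒲]) ω)
    (hRA : μ[Y | 𝒲] =ᵐ[μ] μ[Y | 𝒵])
    (hM : Measurable[𝒵] M) (hMint : Integrable M μ) :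
    Integrable (fun ω => T ω / (S ω * H ω) * (D ω * (Y ω - M ω))) μ ∧
    μ[fun ω => T ω / (S ω * H ω) * (D ω * (Y ω - M ω)) | 𝒵] =ᵐ[μ]
      fun ω => (μ[Y | 𝒵]) ω - M ω := by
  have h𝒵 : 𝒵 ≤ m0 := h𝒵𝒲.trans h𝒲
  have hDb : ∀ᵐ ω ∂μ, ‖D ω‖ ≤ 1 := Eventually.of_forall fun ω => by
    rcases hD01 ω with h | h <;> simp [h]
  have hTb : ∀ᵐ ω ∂μ, ‖T ω‖ ≤ 1 := Eventually.of_forall fun ω => by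
    rcases hT01 ω with h | h <;> simp [h]
  have hDY : Integrable (fun ω => D ω * Y ω) μ := hYint.bdd_mul hDint.1 hDb
  have hDM : Integrable (D * M) μ := hMint.bdd_mul hDint.1 hDb
  have hwm : Measurable[𝒲] (fun ω => T ω / (S ω * H ω)) :=
    hTmeas.div (hSmeas.mul (hHmeas.mono h𝒵𝒲 le_rfl))
  have hwb : ∀ᵐ ω ∂μ, ‖T ω / (S ω * H ω)‖ ≤ 1 / (sbar * hbar) := by
    filter_upwards [hTb, hHbound, hSbound] with ω h1 h2 h3
    have hp : sbar * hbar ≤ S ω * H ω := by gcongr; linarith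
    have hq : 0 < sbar * hbar := by positivity
    rw [norm_div, Real.norm_of_nonneg (hq.le.trans hp)]
    gcongr
  have hg : Integrable ((fun ω => D ω * Y ω) - D * M) μ := hDY.sub hDM
  have hTint : Integrable T μ :=
    Integrable.of_bound (hTmeas.mono h𝒲 le_rfl).aestronglyMeasurable 1 hTb
  have hfeq : (fun ω => T ω / (S ω * H ω) * (D ω * (Y ω - M ω)))
      = (fun ω => T ω / (S ω * H ω)) * ((fun ω => D ω * Y ω) - D * M) := by
    funext ω; simp [mul_sub]
  have hfint : Integrable ((fun ω => T ω / (S ω * H ω)) * ((fun ω => D ω * Y ω) - D * M)) μ :=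
    hg.bdd_mul (hwm.mono h𝒲 le_rfl).aestronglyMeasurable hwb
  rw [hfeq]
  refine ⟨hfint, ?_⟩
  have hB : Measurable[𝒵] (fun ω => 1 / H ω * ((μ[Y | 𝒵]) ω - M ω)) :=
    (measurable_const.div hHmeas).mul (stronglyMeasurable_condExp.measurable.sub hM)
  have hBint : Integrable (fun ω => 1 / H ω * ((μ[Y | 𝒵]) ω - M ω)) μ := by
    refine Integrable.bdd_mul (c := 1 / hbar) (integrable_condExp.sub hMint)
      ((measurable_const.div hHmeas).mono h𝒵 le_rfl).aestronglyMeasurable ?_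
    filter_upwards [hHbound] with ω h
    rw [norm_div, Real.norm_of_nonneg (hhbar0.le.trans h), norm_one]
    gcongr
  have hTB : Integrable (T * fun ω => 1 / H ω * ((μ[Y | 𝒵]) ω - M ω)) μ :=
    hBint.bdd_mul hTint.1 hTb
  have hW : μ[(fun ω => T ω / (S ω * H ω)) * ((fun ω => D ω * Y ω) - D * M) | 𝒲] =ᵐ[μ]
      T * fun ω => 1 / H ω * ((μ[Y | 𝒵]) ω - M ω) := by
    filter_upwards [condExp_mul_of_stronglyMeasurable_left hwm.stronglyMeasurable hfint hg,
      condExp_sub hDY hDM 𝒲, condExp_mul_of_stronglyMeasurable_right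
        (hM.mono h𝒵𝒲 le_rfl).stronglyMeasurable hDM hDint, hMAR, hRA, hS, hHbound, hSbound]
      with ω h1 h2 h3 h4 h5 h6 h7 h8
    have hS0 : S ω ≠ 0 := (hsbar0.trans_le h8).ne'
    have hH0 : H ω ≠ 0 := (hhbar0.trans_le h7).ne'
    rw [h1, Pi.mul_apply, h2, Pi.sub_apply, h3, h4, Pi.mul_apply, Pi.mul_apply, h5, ← h6]
    field_simp
  filter_upwards [condExp_condExp_of_le (μ := μ) (f := (fun ω => T ω / (S ω * H ω)) *
      ((fun ω => D ω * Y ω) - D * M)) h𝒵𝒲 h𝒲, condExp_congr_ae (m := 𝒵) hW,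
    condExp_mul_of_stronglyMeasurable_right hB.stronglyMeasurable hTB hTint, hH, hHbound]
    with ω h1 h2 h3 h4 h5
  have hH0 : H ω ≠ 0 := (hhbar0.trans_le h5).ne'
  rw [← h1, h2, h3, Pi.mul_apply, ← h4]
  field_simp

/-- **Unbiasedness of the doubly robust signal in a randomized experiment with a
partially missing outcome.** With nested sub-σ-algebras `𝒵 ⊆ 𝒲`, treatment
propensity `H = E[T | 𝒵]`, missingness propensity `S = E[D | 𝒲]`, observed outcome
`Y° = D·(T·Y¹ + (1−T)·Y⁰)`, missingness at random given `𝒲` and random treatment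
assignment, for all 𝒵-measurable integrable plug-ins `M₁, M₀` such that the signal
is integrable,
`E[M₁ − M₀ + (DT/(SH))(Y° − M₁) − (D(1−T)/(S(1−H)))(Y° − M₀) | 𝒵] = E[Y¹ − Y⁰ | 𝒵]`
a.s. -/
theorem dr_signal_unbiased_experiment_missing_outcome
    {Ω : Type*} {m0 : MeasurableSpace Ω} {μ : Measure Ω} [IsProbabilityMeasure μ]
    (𝒵 𝒲 : MeasurableSpace Ω) (h𝒵𝒲 : 𝒵 ≤ 𝒲) (h𝒲 : 𝒲 ≤ m0)
    (T D Y1 Y0 H S : Ω → ℝ)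
    (hbar sbar : ℝ) (hhbar0 : 0 < hbar) (hhbar1 : hbar < 1 / 2)
    (hsbar0 : 0 < sbar) (hsbar1 : sbar < 1)
    (hT01 : ∀ ω, T ω = 0 ∨ T ω = 1) (hD01 : ∀ ω, D ω = 0 ∨ D ω = 1)
    (hTmeas : Measurable[𝒲] T)
    (Yo : Ω → ℝ) (hYo : Yo = fun ω => D ω * (T ω * Y1 ω + (1 - T ω) * Y0 ω))
    (hHmeas : Measurable[𝒵] H)
    (hH : H =ᵐ[μ] μ[T | 𝒵])
    (hHbound : ∀ᵐ ω ∂μ, hbar ≤ H ω ∧ H ω ≤ 1 - hbar)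
    (hSmeas : Measurable[𝒲] S)
    (hS : S =ᵐ[μ] μ[D | 𝒲])
    (hSbound : ∀ᵐ ω ∂μ, sbar ≤ S ω ∧ S ω ≤ 1)
    (hY1int : Integrable Y1 μ) (hY0int : Integrable Y0 μ)
    (hMAR1 : μ[fun ω => D ω * Y1 ω | 𝒲] =ᵐ[μ] fun ω => S ω * (μ[Y1 | 𝒲]) ω)
    (hMAR0 : μ[fun ω => D ω * Y0 ω | 𝒲] =ᵐ[μ] fun ω => S ω * (μ[Y0 | 𝒲]) ω)
    (hRA1 : μ[Y1 | 𝒲] =ᵐ[μ] μ[Y1 | 𝒵])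
    (hRA0 : μ[Y0 | 𝒲] =ᵐ[μ] μ[Y0 | 𝒵]) :
    ∀ M1 M0 : Ω → ℝ, Measurable[𝒵] M1 → Measurable[𝒵] M0 →
      Integrable M1 μ → Integrable M0 μ →
      Integrable (fun ω => M1 ω - M0 ω
        + D ω * T ω / (S ω * H ω) * (Yo ω - M1 ω)
        - D ω * (1 - T ω) / (S ω * (1 - H ω)) * (Yo ω - M0 ω)) μ →
      μ[fun ω => M1 ω - M0 ω
          + D ω * T ω / (S ω * H ω) * (Yo ω - M1 ω)
          - D ω * (1 - T ω) / (S ω * (1 - H ω)) * (Yo ω - M0 ω) | 𝒵] =ᵐ[μ]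
        μ[fun ω => Y1 ω - Y0 ω | 𝒵] := by
  intro M1 M0 hM1 hM0 hM1i hM0i _
  have h𝒵 : 𝒵 ≤ m0 := h𝒵𝒲.trans h𝒲
  have hDint : Integrable D μ := by
    by_contra hn
    rw [condExp_of_not_integrable hn] at hS
    obtain ⟨ω, h1, h2⟩ := (hS.and hSbound).exists
    simp at h1
    linarith [h2.1]
  have hTint : Integrable T μ :=
    Integrable.of_bound (hTmeas.mono h𝒲 le_rfl).aestronglyMeasurable 1
      (Eventually.of_forall fun ω => by rcases hT01 ω with h | h <;> simp [h])
  obtain ⟨i1, e1⟩ := arm_aux 𝒵 𝒲 h𝒵𝒲 h𝒲 T D Y1 H S M1 hbar sbar hhbar0 hsbar0 hT01 hD01 hDint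
    hTmeas hHmeas hH (hHbound.mono fun _ h => h.1) hSmeas hS (hSbound.mono fun _ h => h.1)
    hY1int hMAR1 hRA1 hM1 hM1i
  have hH' : (fun ω => 1 - H ω) =ᵐ[μ] μ[fun ω => 1 - T ω | 𝒵] := by
    have h := condExp_sub (integrable_const (μ := μ) (1 : ℝ)) hTint 𝒵
    rw [condExp_const h𝒵] at h
    filter_upwards [h, hH] with ω h1 h2
    rw [h2]
    exact h1.symm
  obtain ⟨i0, e0⟩ := arm_aux 𝒵 𝒲 h𝒵𝒲 h𝒲 (fun ω => 1 - T ω) D Y0 (fun ω => 1 - H ω) S M0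
    hbar sbar hhbar0 hsbar0 (fun ω => by rcases hT01 ω with h | h <;> simp [h]) hD01 hDint
    (measurable_const.sub hTmeas) (measurable_const.sub hHmeas) hH'
    (hHbound.mono fun _ h => by linarith [h.2]) hSmeas hS (hSbound.mono fun _ h => h.1)
    hY0int hMAR0 hRA0 hM0 hM0i
  have key : (fun ω => M1 ω - M0 ω
          + D ω * T ω / (S ω * H ω) * (Yo ω - M1 ω)
          - D ω * (1 - T ω) / (S ω * (1 - H ω)) * (Yo ω - M0 ω))
      = ((M1 - M0) + (fun ω => T ω / (S ω * H ω) * (D ω * (Y1 ω - M1 ω))))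
        - (fun ω => (1 - T ω) / (S ω * (1 - H ω)) * (D ω * (Y0 ω - M0 ω))) := by
    funext ω
    subst hYo
    simp only [Pi.sub_apply, Pi.add_apply]
    rcases hT01 ω with h | h <;> rcases hD01 ω with h' | h' <;> simp [h, h']
  rw [key]
  have hMM : μ[M1 - M0 | 𝒵] = M1 - M0 :=
    condExp_of_stronglyMeasurable h𝒵 (hM1.sub hM0).stronglyMeasurable (hM1i.sub hM0i)
  filter_upwards [condExp_sub ((hM1i.sub hM0i).add i1) i0 𝒵, condExp_add (hM1i.sub hM0i) i1 𝒵,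
    e1, e0, condExp_sub hY1int hY0int 𝒵] with ω h1 h2 h3 h4 h5
  have h5' : (μ[fun ω => Y1 ω - Y0 ω | 𝒵]) ω = (μ[Y1 | 𝒵] - μ[Y0 | 𝒵]) ω := h5
  rw [h1, Pi.sub_apply, h2, Pi.add_apply, h3, h4, hMM, h5', Pi.sub_apply, Pi.sub_apply]
  ring
end

section
/- Assume Y¹ and Y⁰ are integrable, and let M₁, M₀ be 𝒵-measurable random variables with S·M₁ = E[D·Y¹ | 𝒵] a.s. and (1−S)·M₀ = E[(1−D)·Y⁰ | 𝒵] a.s. Then for all 𝒵-measurable bounded real random variables h, h₁, h₀: (i) E[(1 − D/S)·h₁ | 𝒵] = 0 a.s.; (ii) E[(1 − (1−D)/(1−S))·h₀ | 𝒵] = 0 a.s.; (iii) E[(D/S²)·(Y° − M₁)·h | 𝒵] = 0 a.s. and E[((1−D)/(1−S)²)·(Y° − M₀)·h | 𝒵] = 0 a.s. (Neyman orthogonality of the doubly robust CATE signal: the pathwise derivatives of its conditional mean with respect to the two regression-function components and the propensity-score component all vanish.) -/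
open MeasureTheory Filter
open scoped ENNReal

/-- Pull-out: a `m`-measurable multiple of a variable with null conditional mean has null
conditional mean (if it is not integrable, the conditional expectation is `0` by convention). -/
lemma condExp_mul_zero_aux {Ω : Type*} {m0 : MeasurableSpace Ω} {μ : Measure Ω}
    {m : MeasurableSpace Ω} {w X F : Ω → ℝ}
    (hw : Measurable[m] w) (hX : Integrable X μ) (hX0 : μ[X | m] =ᵐ[μ] 0)
    (hF : F =ᵐ[μ] w * X) : μ[F | m] =ᵐ[μ] fun _ => (0 : ℝ) := by
  refine (condExp_congr_ae hF).trans ?_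
  by_cases hi : Integrable (w * X) μ
  · refine (condExp_mul_of_stronglyMeasurable_left hw.stronglyMeasurable hi hX).trans ?_
    filter_upwards [hX0] with ω h
    simp [h]
  · rw [condExp_of_not_integrable hi]
    rfl

/-- One treatment arm. -/
lemma arm_aux_s18 {Ω : Type*} {m0 : MeasurableSpace Ω} {μ : Measure Ω} [IsProbabilityMeasure μ]
    (m : MeasurableSpace Ω) (hm : m ≤ m0) (D Y S M Yo : Ω → ℝ) (c : ℝ) (hc : 0 < c)
    (hD01 : ∀ ω, D ω = 0 ∨ D ω = 1) (hYo : ∀ ω, D ω * Yo ω = D ω * Y ω)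
    (hDint : Integrable D μ) (hSm : Measurable[m] S) (hS : S =ᵐ[μ] μ[D | m])
    (hSb : ∀ᵐ ω ∂μ, c ≤ S ω) (hY : Integrable Y μ) (hMm : Measurable[m] M)
    (hM : (fun ω => S ω * M ω) =ᵐ[μ] μ[fun ω => D ω * Y ω | m])
    (h h1 : Ω → ℝ) (hh : Measurable[m] h) (hh1 : Measurable[m] h1) :
    (μ[fun ω => (1 - D ω / S ω) * h1 ω | m] =ᵐ[μ] fun _ => (0 : ℝ)) ∧
    (μ[fun ω => D ω / S ω ^ 2 * (Yo ω - M ω) * h ω | m] =ᵐ[μ] fun _ => (0 : ℝ)) := by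
  have hDb : ∀ᵐ ω ∂μ, ‖D ω‖ ≤ 1 := by
    refine Eventually.of_forall fun ω => ?_
    rcases hD01 ω with h | h <;> simp [h]
  have hSint : Integrable S μ := integrable_condExp.congr hS.symm
  have hSself : μ[S | m] = S := condExp_of_stronglyMeasurable hm hSm.stronglyMeasurable hSint
  have hSinv : ∀ᵐ ω ∂μ, ‖(S ω)⁻¹‖ ≤ c⁻¹ := by
    filter_upwards [hSb] with ω hω
    rw [norm_inv, Real.norm_of_nonneg (hc.le.trans hω)]
    exact inv_anti₀ hc hω
  have hMint : Integrable M μ := by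
    have h1 : Integrable (fun ω => S ω * M ω) μ := integrable_condExp.congr hM.symm
    have h2 := h1.bdd_mul (f := fun ω => (S ω)⁻¹) (c := c⁻¹)
      ((hSm.inv.mono hm le_rfl).aestronglyMeasurable) hSinv
    refine h2.congr ?_
    filter_upwards [hSb] with ω hω
    have : S ω ≠ 0 := (hc.trans_le hω).ne'
    field_simp
  have hDY : Integrable (fun ω => D ω * Y ω) μ := hY.bdd_mul hDint.aestronglyMeasurable hDb
  have hDM : Integrable (M * D) μ := by
    have : Integrable (fun ω => D ω * M ω) μ := hMint.bdd_mul hDint.aestronglyMeasurable hDb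
    exact this.congr (Eventually.of_forall fun ω => mul_comm _ _)
  constructor
  · refine condExp_mul_zero_aux (w := fun ω => h1 ω / S ω) (X := S - D) (hh1.div hSm)
      (hSint.sub hDint) ?_ ?_
    · filter_upwards [condExp_sub hSint hDint m, hS] with ω a b
      rw [a, Pi.sub_apply, hSself, ← b]
      simp
    · filter_upwards [hSb] with ω hω
      have : S ω ≠ 0 := (hc.trans_le hω).ne'
      simp only [Pi.mul_apply, Pi.sub_apply]
      field_simp
  · refine condExp_mul_zero_aux (w := fun ω => h ω / S ω ^ 2)
      (X := (fun ω => D ω * Y ω) - M * D) (hh.div (hSm.pow_const 2)) (hDY.sub hDM) ?_ ?_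
    · filter_upwards [condExp_sub hDY hDM m, hS, hM,
        condExp_mul_of_stronglyMeasurable_left hMm.stronglyMeasurable hDM hDint] with ω a b d e
      rw [a, Pi.sub_apply, e, ← d, Pi.mul_apply, ← b]
      simp [mul_comm]
    · refine Eventually.of_forall fun ω => ?_
      simp only [Pi.mul_apply, Pi.sub_apply]
      rw [← hYo ω]
      ring

/-- **Neyman orthogonality of the doubly robust CATE signal.** With
`S·M₁ = E[D·Y¹ | 𝒵]` and `(1−S)·M₀ = E[(1−D)·Y⁰ | 𝒵]`, for all 𝒵-measurable bounded
`h, h₁, h₀`: (i) `E[(1 − D/S)·h₁ | 𝒵] = 0`; (ii) `E[(1 − (1−D)/(1−S))·h₀ | 𝒵] = 0`;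
(iii) `E[(D/S²)·(Y° − M₁)·h | 𝒵] = 0` and `E[((1−D)/(1−S)²)·(Y° − M₀)·h | 𝒵] = 0`,
all a.s. -/
theorem dr_signal_neyman_orthogonality_cate
    {Ω : Type*} {m0 : MeasurableSpace Ω} {μ : Measure Ω} [IsProbabilityMeasure μ]
    (𝒵 : MeasurableSpace Ω) (h𝒵 : 𝒵 ≤ m0)
    (D Y1 Y0 S : Ω → ℝ) (sbar : ℝ) (hsbar0 : 0 < sbar) (hsbar1 : sbar < 1 / 2)
    (hD01 : ∀ ω, D ω = 0 ∨ D ω = 1)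
    (Yo : Ω → ℝ) (hYo : Yo = fun ω => D ω * Y1 ω + (1 - D ω) * Y0 ω)
    (hSmeas : Measurable[𝒵] S)
    (hS : S =ᵐ[μ] μ[D | 𝒵])
    (hSbound : ∀ᵐ ω ∂μ, sbar ≤ S ω ∧ S ω ≤ 1 - sbar)
    (hY1int : Integrable Y1 μ) (hY0int : Integrable Y0 μ)
    (M1 M0 : Ω → ℝ)
    (hM1meas : Measurable[𝒵] M1) (hM0meas : Measurable[𝒵] M0)
    (hM1 : (fun ω => S ω * M1 ω) =ᵐ[μ] μ[fun ω => D ω * Y1 ω | 𝒵])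
    (hM0 : (fun ω => (1 - S ω) * M0 ω) =ᵐ[μ] μ[fun ω => (1 - D ω) * Y0 ω | 𝒵]) :
    ∀ h h1 h0 : Ω → ℝ,
      Measurable[𝒵] h → Measurable[𝒵] h1 → Measurable[𝒵] h0 →
      (∃ C : ℝ, ∀ ω, |h ω| ≤ C) → (∃ C : ℝ, ∀ ω, |h1 ω| ≤ C) →
      (∃ C : ℝ, ∀ ω, |h0 ω| ≤ C) →
      (μ[fun ω => (1 - D ω / S ω) * h1 ω | 𝒵] =ᵐ[μ] fun _ => (0 : ℝ)) ∧
      (μ[fun ω => (1 - (1 - D ω) / (1 - S ω)) * h0 ω | 𝒵] =ᵐ[μ] fun _ => (0 : ℝ)) ∧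
      (μ[fun ω => D ω / S ω ^ 2 * (Yo ω - M1 ω) * h ω | 𝒵] =ᵐ[μ] fun _ => (0 : ℝ)) ∧
      (μ[fun ω => (1 - D ω) / (1 - S ω) ^ 2 * (Yo ω - M0 ω) * h ω | 𝒵] =ᵐ[μ]
        fun _ => (0 : ℝ)) := by
  intro h h1 h0 hh hh1 hh0 _ _ _
  have hDint : Integrable D μ := by
    by_contra hn
    rw [condExp_of_not_integrable hn] at hS
    obtain ⟨ω, a, b⟩ := (hS.and hSbound).exists
    rw [a] at b
    exact absurd b.1 (not_le.mpr hsbar0)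
  have hS' : (fun ω => 1 - S ω) =ᵐ[μ] μ[fun ω => 1 - D ω | 𝒵] := by
    have h1 := condExp_sub (integrable_const (μ := μ) (1 : ℝ)) hDint 𝒵
    rw [condExp_const h𝒵] at h1
    filter_upwards [h1, hS] with ω a b
    rw [b]
    exact a.symm
  obtain ⟨a1, a2⟩ := arm_aux_s18 𝒵 h𝒵 D Y1 S M1 Yo sbar hsbar0 hD01
    (fun ω => by rcases hD01 ω with e | e <;> simp [hYo, e]) hDint hSmeas hS
    (hSbound.mono fun _ e => e.1) hY1int hM1meas hM1 h h1 hh hh1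
  obtain ⟨b1, b2⟩ := arm_aux_s18 𝒵 h𝒵 (fun ω => 1 - D ω) Y0 (fun ω => 1 - S ω) M0 Yo sbar hsbar0
    (fun ω => by rcases hD01 ω with e | e <;> simp [e])
    (fun ω => by rcases hD01 ω with e | e <;> simp [hYo, e])
    ((integrable_const 1).sub hDint) (hSmeas.const_sub 1) hS'
    (hSbound.mono fun _ e => by linarith [e.2]) hY0int hM0meas hM0 h h0 hh hh0
  exact ⟨a1, b1, a2, b2⟩
end
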